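/- Let B be an open ball in ℝⁿ containing the closure of a bounded open set, μ₁, μ₂ ∈ ℝⁿ orthonormal, and χ ∈ C₀^∞(ℝⁿ) with χ ≡ 1 on a neighborhood of the closure of B. Define a(x) = (1/(2π)) ∫_{ℝ²} χ(x − y₁μ₁ − y₂μ₂)/(y₁ + iy₂) dy₁ dy₂. Then a is smooth on ℝⁿ and satisfies ((μ₁ + iμ₂)·∇)a = 1 on B. -/

import Mathlib

/-! The kernel `1 / (y₁ + i y₂)` is locally integrable on the plane, so for each `x` the function
`a` is, along the plane `x + ℝ μ₁ + ℝ μ₂`, the convolution of `1 / (2π (y₁ + i y₂))` with the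
restriction `planeSlice χ μ₁ μ₂ x` of `χ` to that plane. This restriction is smooth jointly in `x`
and the plane coordinates, with support in a compact set that is uniform for bounded `x` (the
coordinates are recovered from a vector by pairing with `μ₁` and `μ₂`). Smoothness of `a` is then
the smoothness of convolutions depending on a parameter.

The derivatives of `a` along `μ₁` and `μ₂` fall on the smooth factor of the convolution, so that
`((μ₁ + iμ₂)·∇) a = χ` follows from the Cauchy–Pompeiu formula
`∫ (∂₁ g + i ∂₂ g) / (y₁ + i y₂) = -2π g(0)` (`integral_cauchyKernel_mul_dbar`). In polar
coordinates the integrand, including the Jacobian `r`, is `∂_r g + (i / r) ∂_θ g`: the first term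
integrates to `-g(0)` along each ray and the second to `0` along each circle. -/

open scoped BigOperators
open MeasureTheory Set Filter Topology
open scoped Convolution

/-- The kernel `1 / (y₁ + i y₂)` on the plane, with value `0` at the origin. -/
noncomputable def cauchyKernel (y : ℝ × ℝ) : ℂ := ((y.1 : ℂ) + Complex.I * (y.2 : ℂ))⁻¹

lemma measurable_cauchyKernel : Measurable cauchyKernel := by
  unfold cauchyKernel
  fun_prop

lemma cauchyKernel_polar (r θ : ℝ) :
    cauchyKernel (r * Real.cos θ, r * Real.sin θ)
      = (r : ℂ)⁻¹ * ((Real.cos θ : ℂ) - Complex.I * (Real.sin θ : ℂ)) := by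
  have h : ((Real.cos θ : ℂ) + Complex.I * (Real.sin θ : ℂ))
      * ((Real.cos θ : ℂ) - Complex.I * (Real.sin θ : ℂ)) = 1 := by
    have h2 : ((Real.cos θ : ℂ)) ^ 2 + (Real.sin θ : ℂ) ^ 2 = 1 := by
      exact_mod_cast Real.cos_sq_add_sin_sq θ
    linear_combination h2 - (Real.sin θ : ℂ) ^ 2 * Complex.I_sq
  unfold cauchyKernel
  rw [eq_inv_of_mul_eq_one_right h, ← mul_inv]
  congr 1
  push_cast
  ring

lemma norm_cauchyKernel_polar {r : ℝ} (hr : 0 < r) (θ : ℝ) :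
    ‖cauchyKernel (r * Real.cos θ, r * Real.sin θ)‖ = r⁻¹ := by
  have h : (((r * Real.cos θ : ℝ) : ℂ) + Complex.I * ((r * Real.sin θ : ℝ) : ℂ))
      = (r : ℂ) * Complex.exp (θ * Complex.I) := by
    rw [Complex.exp_mul_I]
    push_cast
    ring
  unfold cauchyKernel
  rw [h, norm_inv, norm_mul, Complex.norm_exp_ofReal_mul_I, mul_one, Complex.norm_real,
    Real.norm_of_nonneg hr.le]

/-- The polar radius of a point is at most twice its sup norm. -/
lemma le_two_mul_of_norm_polar_le {r θ C : ℝ}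
    (h : ‖((r * Real.cos θ, r * Real.sin θ) : ℝ × ℝ)‖ ≤ C) : r ≤ 2 * C := by
  rw [Prod.norm_def, max_le_iff] at h
  have h1 := abs_le.1 h.1
  have h2 := abs_le.1 h.2
  have hC : 0 ≤ C := (norm_nonneg _).trans h.1
  simp only at h1 h2
  have e : r ^ 2 = (r * Real.cos θ) ^ 2 + (r * Real.sin θ) ^ 2 := by
    linear_combination (-r ^ 2) * Real.cos_sq_add_sin_sq θ
  nlinarith [sq_le_sq' h1.1 h1.2, sq_le_sq' h2.1 h2.2]

lemma locallyIntegrable_cauchyKernel : LocallyIntegrable cauchyKernel := by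
  rw [locallyIntegrable_iff]
  intro K hK
  refine ⟨measurable_cauchyKernel.aestronglyMeasurable, ?_⟩
  obtain ⟨C, hC⟩ := hK.isBounded.exists_norm_le
  have hR : MeasurableSet (Icc 0 (2 * C) ×ˢ Icc (-Real.pi) Real.pi : Set (ℝ × ℝ)) :=
    measurableSet_Icc.prod measurableSet_Icc
  rw [HasFiniteIntegral, ← lintegral_indicator hK.measurableSet, ← lintegral_comp_polarCoord_symm]
  calc _ ≤ ∫⁻ p in polarCoord.target,
        (Icc 0 (2 * C) ×ˢ Icc (-Real.pi) Real.pi : Set (ℝ × ℝ)).indicator 1 p := by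
        refine setLIntegral_mono' polarCoord.open_target.measurableSet ?_
        rintro ⟨r, θ⟩ ⟨hr, hθ⟩
        have hr : 0 < r := hr
        simp only [polarCoord_symm_apply]
        by_cases hk : ((r * Real.cos θ, r * Real.sin θ) : ℝ × ℝ) ∈ K
        · have hm : (r, θ) ∈ (Icc 0 (2 * C) ×ˢ Icc (-Real.pi) Real.pi : Set (ℝ × ℝ)) :=
            ⟨⟨hr.le, le_two_mul_of_norm_polar_le (hC _ hk)⟩, ⟨hθ.1.le, hθ.2.le⟩⟩
          rw [indicator_of_mem hk, indicator_of_mem hm, ← ofReal_norm,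
            norm_cauchyKernel_polar hr, smul_eq_mul, ← ENNReal.ofReal_mul hr.le,
            mul_inv_cancel₀ hr.ne']
          simp
        · rw [indicator_of_notMem hk]
          simp
    _ ≤ ∫⁻ p, (Icc 0 (2 * C) ×ˢ Icc (-Real.pi) Real.pi : Set (ℝ × ℝ)).indicator 1 p :=
        setLIntegral_le_lintegral _ _
    _ = volume (Icc 0 (2 * C) ×ˢ Icc (-Real.pi) Real.pi : Set (ℝ × ℝ)) :=
        lintegral_indicator_one hR
    _ < ⊤ := (isCompact_Icc.prod isCompact_Icc).measure_lt_top

/-- A directional derivative of a compactly supported function, in a direction depending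
continuously on the polar coordinates, is integrable for `dr dθ`. -/
lemma integrableOn_polar {g : ℝ × ℝ → ℂ} (hg : ContDiff ℝ 1 g) (hs : HasCompactSupport g)
    {v : ℝ × ℝ → ℝ × ℝ} (hv : Continuous v) :
    IntegrableOn (fun p : ℝ × ℝ =>
      fderiv ℝ g (p.1 * Real.cos p.2, p.1 * Real.sin p.2) (v p))
      (Ioi 0 ×ˢ Ioo (-Real.pi) Real.pi) := by
  obtain ⟨C, hC⟩ := hs.isBounded.exists_norm_le
  have hc : Continuous (fun p : ℝ × ℝ =>
      fderiv ℝ g (p.1 * Real.cos p.2, p.1 * Real.sin p.2) (v p)) := by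
    have := hg.continuous_fderiv one_ne_zero
    fun_prop
  have hi := hc.continuousOn.integrableOn_compact (μ := volume)
    (isCompact_Icc.prod isCompact_Icc : IsCompact
      (Icc 0 (2 * C) ×ˢ Icc (-Real.pi) Real.pi : Set (ℝ × ℝ)))
  refine hi.of_forall_sdiff_eq_zero (measurableSet_Ioi.prod measurableSet_Ioo) ?_
  rintro ⟨r, θ⟩ ⟨⟨hr, hθ⟩, hn⟩
  have hr : 0 < r := hr
  have : fderiv ℝ g (r * Real.cos θ, r * Real.sin θ) = 0 := by
    by_contra hne
    refine hn ⟨⟨hr.le, le_two_mul_of_norm_polar_le (θ := θ) (hC _ ?_)⟩,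
      ⟨hθ.1.le, hθ.2.le⟩⟩
    exact support_fderiv_subset ℝ hne
  simp [this]

/-- The radial derivative integrates to `-g 0` along each ray. -/
lemma integral_radial {g : ℝ × ℝ → ℂ} (hg : ContDiff ℝ 1 g) (hs : HasCompactSupport g) (θ : ℝ) :
    ∫ r in Ioi (0 : ℝ), fderiv ℝ g (r * Real.cos θ, r * Real.sin θ) (Real.cos θ, Real.sin θ)
      = -g 0 := by
  obtain ⟨C, hC⟩ := hs.isBounded.exists_norm_le
  have hd (r : ℝ) : HasDerivAt (fun r : ℝ => g (r * Real.cos θ, r * Real.sin θ))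
      (fderiv ℝ g (r * Real.cos θ, r * Real.sin θ) (Real.cos θ, Real.sin θ)) r := by
    have h1 : HasDerivAt (fun r : ℝ => ((r * Real.cos θ, r * Real.sin θ) : ℝ × ℝ))
        (Real.cos θ, Real.sin θ) r := by
      simpa using ((hasDerivAt_id r).mul_const (Real.cos θ)).prodMk
        ((hasDerivAt_id r).mul_const (Real.sin θ))
    exact ((hg.differentiable one_ne_zero _).hasFDerivAt).comp_hasDerivAt r h1
  have hc : Continuous (fun r : ℝ =>
      fderiv ℝ g (r * Real.cos θ, r * Real.sin θ) (Real.cos θ, Real.sin θ)) := by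
    have := hg.continuous_fderiv one_ne_zero
    fun_prop
  have hi : IntegrableOn (fun r : ℝ =>
      fderiv ℝ g (r * Real.cos θ, r * Real.sin θ) (Real.cos θ, Real.sin θ)) (Ioi 0) := by
    refine (hc.continuousOn.integrableOn_compact (μ := volume)
      (isCompact_Icc (a := 0) (b := 2 * C))).of_forall_sdiff_eq_zero measurableSet_Ioi ?_
    rintro r ⟨hr, hn⟩
    have hr : 0 < r := hr
    have : fderiv ℝ g (r * Real.cos θ, r * Real.sin θ) = 0 := by
      by_contra hne
      exact hn ⟨hr.le, le_two_mul_of_norm_polar_le (hC _ (support_fderiv_subset ℝ hne))⟩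
    simp [this]
  have ht : Tendsto (fun r : ℝ => g (r * Real.cos θ, r * Real.sin θ)) atTop (𝓝 0) := by
    refine tendsto_const_nhds.congr' ?_
    filter_upwards [eventually_gt_atTop (2 * C)] with r hr
    by_contra hne
    exact absurd (le_two_mul_of_norm_polar_le (hC _ (subset_tsupport g (Ne.symm hne)))) hr.not_ge
  rw [integral_Ioi_of_hasDerivAt_of_tendsto' (fun r _ => hd r) hi ht]
  simp [Prod.mk_zero_zero]

/-- The angular derivative integrates to `0` along each circle. -/
lemma integral_angular {g : ℝ × ℝ → ℂ} (hg : ContDiff ℝ 1 g) {r : ℝ} (hr : 0 < r) :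
    ∫ θ in Ioo (-Real.pi) Real.pi,
      fderiv ℝ g (r * Real.cos θ, r * Real.sin θ) (-Real.sin θ, Real.cos θ) = 0 := by
  have hd (θ : ℝ) : HasDerivAt (fun θ : ℝ => r⁻¹ • g (r * Real.cos θ, r * Real.sin θ))
      (fderiv ℝ g (r * Real.cos θ, r * Real.sin θ) (-Real.sin θ, Real.cos θ)) θ := by
    have h1 : HasDerivAt (fun θ : ℝ => ((r * Real.cos θ, r * Real.sin θ) : ℝ × ℝ))
        (r • (-Real.sin θ, Real.cos θ)) θ := by
      simpa using ((Real.hasDerivAt_cos θ).const_mul r).prodMk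
        ((Real.hasDerivAt_sin θ).const_mul r)
    have h2 := (((hg.differentiable one_ne_zero _).hasFDerivAt).comp_hasDerivAt θ h1).const_smul r⁻¹
    rw [map_smul, smul_smul, inv_mul_cancel₀ hr.ne', one_smul] at h2
    exact h2
  have hc : Continuous (fun θ : ℝ =>
      fderiv ℝ g (r * Real.cos θ, r * Real.sin θ) (-Real.sin θ, Real.cos θ)) := by
    have := hg.continuous_fderiv one_ne_zero
    fun_prop
  rw [← integral_Ioc_eq_integral_Ioo, ← intervalIntegral.integral_of_le (by linarith [Real.pi_pos]),
    intervalIntegral.integral_eq_sub_of_hasDerivAt (fun θ _ => hd θ) (hc.intervalIntegrable _ _)]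
  simp

/-- Cauchy–Pompeiu formula for a compactly supported function, evaluated at the origin. -/
lemma integral_cauchyKernel_mul_dbar {g : ℝ × ℝ → ℂ} (hg : ContDiff ℝ 1 g)
    (hs : HasCompactSupport g) :
    ∫ y, cauchyKernel y * (fderiv ℝ g y (1, 0) + Complex.I * fderiv ℝ g y (0, 1))
      = -(2 * Real.pi) * g 0 := by
  have hA := integrableOn_polar hg hs (v := fun p => (Real.cos p.2, Real.sin p.2)) (by fun_prop)
  have hB := integrableOn_polar hg hs (v := fun p => (-Real.sin p.2, Real.cos p.2)) (by fun_prop)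
  rw [← integral_comp_polarCoord_symm]
  have hlin (L : ℝ × ℝ →L[ℝ] ℂ) (s t : ℝ) : L (s, t) = s * L (1, 0) + t * L (0, 1) := by
    have : ((s, t) : ℝ × ℝ) = s • (1, 0) + t • (0, 1) := by simp
    rw [this, map_add, map_smul, map_smul]
    simp
  have hcongr : ∀ p ∈ polarCoord.target,
      p.1 • (cauchyKernel (polarCoord.symm p) * (fderiv ℝ g (polarCoord.symm p) (1, 0)
        + Complex.I * fderiv ℝ g (polarCoord.symm p) (0, 1)))
      = fderiv ℝ g (p.1 * Real.cos p.2, p.1 * Real.sin p.2) (Real.cos p.2, Real.sin p.2)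
        + Complex.I *
          fderiv ℝ g (p.1 * Real.cos p.2, p.1 * Real.sin p.2) (-Real.sin p.2, Real.cos p.2) := by
    rintro ⟨r, θ⟩ ⟨hr, hθ⟩
    have hr : (r : ℂ) ≠ 0 := by exact_mod_cast (ne_of_gt hr)
    simp only [polarCoord_symm_apply]
    rw [hlin _ (Real.cos θ), hlin _ (-Real.sin θ), cauchyKernel_polar, Complex.real_smul,
      ← mul_assoc, mul_inv_cancel_left₀ hr, Complex.ofReal_neg]
    generalize fderiv ℝ g (r * Real.cos θ, r * Real.sin θ) (1, 0) = X
    generalize fderiv ℝ g (r * Real.cos θ, r * Real.sin θ) (0, 1) = Y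
    linear_combination (-(Real.sin θ : ℂ) * Y) * Complex.I_sq
  rw [setIntegral_congr_fun polarCoord.open_target.measurableSet hcongr, polarCoord_target,
    integral_add hA (hB.const_mul _), integral_const_mul]
  have hBint : ∫ p in (Ioi 0 ×ˢ Ioo (-Real.pi) Real.pi : Set (ℝ × ℝ)),
      fderiv ℝ g (p.1 * Real.cos p.2, p.1 * Real.sin p.2) (-Real.sin p.2, Real.cos p.2) = 0 := by
    rw [Measure.volume_eq_prod, setIntegral_prod _ hB]
    exact setIntegral_eq_zero_of_forall_eq_zero fun r hr => integral_angular hg hr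
  have hAint : ∫ p in (Ioi 0 ×ˢ Ioo (-Real.pi) Real.pi : Set (ℝ × ℝ)),
      fderiv ℝ g (p.1 * Real.cos p.2, p.1 * Real.sin p.2) (Real.cos p.2, Real.sin p.2)
      = -(2 * Real.pi) * g 0 := by
    rw [Measure.volume_eq_prod, ← Measure.prod_restrict, integral_prod_symm]
    · simp only [integral_radial hg hs]
      rw [setIntegral_const]
      simp only [Real.volume_real_Ioo, smul_neg]
      rw [max_eq_left (by linarith [Real.pi_pos]), Complex.real_smul]
      push_cast
      ring
    · rwa [Measure.prod_restrict]
  rw [hBint, hAint, mul_zero, add_zero]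

/-- The restriction of `χ` to the affine plane through `x` spanned by `μ₁` and `μ₂`. -/
noncomputable def planeSlice {n : ℕ} (χ : (Fin n → ℝ) → ℝ) (μ₁ μ₂ x : Fin n → ℝ)
    (y : ℝ × ℝ) : ℂ := (χ (x + y.1 • μ₁ + y.2 • μ₂) : ℂ)

/-- The support of the slice through `x` lies in a compact set that is uniform for bounded `x`. -/
lemma exists_isCompact_planeSlice {n : ℕ} {μ₁ μ₂ : Fin n → ℝ}
    (hμ₁ : ∑ i, μ₁ i ^ 2 = 1) (hμ₂ : ∑ i, μ₂ i ^ 2 = 1) (hμ₁μ₂ : ∑ i, μ₁ i * μ₂ i = 0)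
    {χ : (Fin n → ℝ) → ℝ} (hχsupp : HasCompactSupport χ) (ρ : ℝ) :
    ∃ k : Set (ℝ × ℝ), IsCompact k ∧
      ∀ x y, x ∈ Metric.ball (0 : Fin n → ℝ) ρ → y ∉ k → planeSlice χ μ₁ μ₂ x y = 0 := by
  obtain ⟨C, hC⟩ := hχsupp.isBounded.exists_norm_le
  -- pairing with `μ₁` and `μ₂` recovers the coordinates of `y₁ μ₁ + y₂ μ₂`
  let Λ : (Fin n → ℝ) → ℝ × ℝ := fun v => (∑ i, μ₁ i * v i, ∑ i, μ₂ i * v i)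
  have hΛ : Continuous Λ := by fun_prop
  refine ⟨Λ '' Metric.closedBall 0 (C + ρ), (isCompact_closedBall _ _).image hΛ, ?_⟩
  intro x y hx hy
  unfold planeSlice
  by_contra hne
  have hne' : χ (x + y.1 • μ₁ + y.2 • μ₂) ≠ 0 := by exact_mod_cast hne
  have h1 := hC _ (subset_tsupport χ hne')
  refine hy ⟨y.1 • μ₁ + y.2 • μ₂, ?_, ?_⟩
  · rw [mem_closedBall_zero_iff]
    have hx' := mem_ball_zero_iff.1 hx
    have : y.1 • μ₁ + y.2 • μ₂ = (x + y.1 • μ₁ + y.2 • μ₂) - x := by abel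
    rw [this]
    exact (norm_sub_le _ _).trans (add_le_add h1 hx'.le)
  · have e1 : ∑ i, μ₁ i * (y.1 * μ₁ i + y.2 * μ₂ i)
        = y.1 * ∑ i, μ₁ i ^ 2 + y.2 * ∑ i, μ₁ i * μ₂ i := by
      rw [Finset.mul_sum, Finset.mul_sum, ← Finset.sum_add_distrib]
      exact Finset.sum_congr rfl fun i _ => by ring
    have e2 : ∑ i, μ₂ i * (y.1 * μ₁ i + y.2 * μ₂ i)
        = y.1 * ∑ i, μ₁ i * μ₂ i + y.2 * ∑ i, μ₂ i ^ 2 := by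
      rw [Finset.mul_sum, Finset.mul_sum, ← Finset.sum_add_distrib]
      exact Finset.sum_congr rfl fun i _ => by ring
    ext
    · simp [Λ, e1, hμ₁, hμ₁μ₂]
    · simp [Λ, e2, hμ₂, hμ₁μ₂]

lemma contDiff_planeSlice_uncurry {n : ℕ} (μ₁ μ₂ : Fin n → ℝ) {χ : (Fin n → ℝ) → ℝ}
    (hχ : ContDiff ℝ (⊤ : ℕ∞) χ) :
    ContDiff ℝ (⊤ : ℕ∞) (fun p : (Fin n → ℝ) × (ℝ × ℝ) => planeSlice χ μ₁ μ₂ p.1 p.2) := by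
  unfold planeSlice
  refine Complex.ofRealCLM.contDiff.comp (hχ.comp ?_)
  fun_prop

/-- the Cauchy transform solution of the inhomogeneous ∂̄-equation:
with `μ₁, μ₂` orthonormal, `χ ∈ C₀^∞(ℝⁿ)` with `χ ≡ 1` near the closure of the ball `B`,
the function `a(x) = (1/(2π)) ∫_{ℝ²} χ(x − y₁μ₁ − y₂μ₂)/(y₁ + iy₂) dy₁ dy₂` is smooth
and satisfies `((μ₁ + iμ₂)·∇) a = 1` on `B`. -/
theorem stmt6 (n : ℕ) (hn : 3 ≤ n) (c : Fin n → ℝ) (R : ℝ) (hR : 0 < R)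
    (μ₁ μ₂ : Fin n → ℝ)
    (hμ₁ : ∑ i, μ₁ i ^ 2 = 1) (hμ₂ : ∑ i, μ₂ i ^ 2 = 1) (hμ₁μ₂ : ∑ i, μ₁ i * μ₂ i = 0)
    (χ : (Fin n → ℝ) → ℝ) (hχsmooth : ContDiff ℝ (⊤ : ℕ∞) χ) (hχsupp : HasCompactSupport χ)
    (hχone : ∃ U : Set (Fin n → ℝ), IsOpen U ∧ closure (Metric.ball c R) ⊆ U ∧
      ∀ x ∈ U, χ x = 1)
    (a : (Fin n → ℝ) → ℂ)
    (ha : ∀ x, a x = (1 / (2 * Real.pi) : ℝ) •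
      ∫ y : ℝ × ℝ, ((χ (x - y.1 • μ₁ - y.2 • μ₂) : ℂ) / ((y.1 : ℂ) + Complex.I * (y.2 : ℂ)))) :
    ContDiff ℝ (⊤ : ℕ∞) a ∧
    ∀ x ∈ Metric.ball c R,
      ∑ i, ((μ₁ i : ℂ) + Complex.I * (μ₂ i : ℂ)) * fderiv ℝ a x (Pi.single i 1) = 1 := by
  -- along the plane through `x`, the function `a` is a convolution with the slice of `χ`
  have hconv (x : Fin n → ℝ) (z : ℝ × ℝ) : a (x + z.1 • μ₁ + z.2 • μ₂)
      = (1 / (2 * Real.pi) : ℝ) •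
        (cauchyKernel ⋆[ContinuousLinearMap.mul ℝ ℂ] planeSlice χ μ₁ μ₂ x) z := by
    rw [ha, convolution_def]
    congr 2
    ext y
    have : x + z.1 • μ₁ + z.2 • μ₂ - y.1 • μ₁ - y.2 • μ₂
        = x + (z - y).1 • μ₁ + (z - y).2 • μ₂ := by
      simp only [Prod.fst_sub, Prod.snd_sub, sub_smul]
      abel
    rw [this, ContinuousLinearMap.mul_apply', planeSlice, cauchyKernel, div_eq_mul_inv, mul_comm]
  have hsmooth : ContDiff ℝ (⊤ : ℕ∞) a := by
    rw [contDiff_iff_contDiffAt]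
    intro x₀
    obtain ⟨k, hk, hgs⟩ := exists_isCompact_planeSlice hμ₁ hμ₂ hμ₁μ₂ hχsupp (‖x₀‖ + 1)
    have h := contDiffOn_convolution_right_with_param_comp (μ := volume) (n := (⊤ : ℕ∞))
      (ContinuousLinearMap.mul ℝ ℂ)
      (s := Metric.ball (0 : Fin n → ℝ) (‖x₀‖ + 1)) (v := fun _ => (0 : ℝ × ℝ))
      contDiffOn_const Metric.isOpen_ball hk hgs locallyIntegrable_cauchyKernel
      (contDiff_planeSlice_uncurry μ₁ μ₂ hχsmooth).contDiffOn
    have h2 := (h.const_smul (1 / (2 * Real.pi) : ℝ)).contDiffAt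
      (Metric.isOpen_ball.mem_nhds (mem_ball_zero_iff.2 (lt_add_one ‖x₀‖)))
    refine h2.congr_of_eventuallyEq (Eventually.of_forall fun x => ?_)
    simpa using hconv x 0
  refine ⟨hsmooth, fun x hx => ?_⟩
  obtain ⟨U, -, hU, hU1⟩ := hχone
  have hχx : χ x = 1 := hU1 x (hU (subset_closure hx))
  set G := planeSlice χ μ₁ μ₂ x with hG
  have hGd : ContDiff ℝ 1 G :=
    ((contDiff_planeSlice_uncurry μ₁ μ₂ hχsmooth).comp
      (contDiff_prodMk_right x)).of_le (by exact_mod_cast le_top)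
  have hGs : HasCompactSupport G := by
    obtain ⟨k, hk, hgs⟩ := exists_isCompact_planeSlice hμ₁ hμ₂ hμ₁μ₂ hχsupp (‖x‖ + 1)
    exact HasCompactSupport.intro hk fun y hy =>
      hgs x y (mem_ball_zero_iff.2 (lt_add_one ‖x‖)) hy
  have hint (w : ℝ × ℝ) : Integrable fun y => cauchyKernel y * fderiv ℝ G (-y) w := by
    have hc : Continuous fun y : ℝ × ℝ => fderiv ℝ G (-y) w := by
      have := hGd.continuous_fderiv one_ne_zero
      fun_prop
    have hs : HasCompactSupport fun y : ℝ × ℝ => fderiv ℝ G (-y) w :=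
      ((hGs.fderiv_apply ℝ w).comp_homeomorph (Homeomorph.neg (ℝ × ℝ)))
    simpa [mul_comm] using
      locallyIntegrable_cauchyKernel.integrable_smul_left_of_hasCompactSupport hc hs
  -- the derivatives of `a` in the plane of `μ₁, μ₂` fall on the slice of `χ`
  have hder (w : ℝ × ℝ) : fderiv ℝ a x (w.1 • μ₁ + w.2 • μ₂)
      = (1 / (2 * Real.pi) : ℝ) • ∫ y, cauchyKernel y * fderiv ℝ G (-y) w := by
    let T : ℝ × ℝ →L[ℝ] (Fin n → ℝ) :=
      (ContinuousLinearMap.fst ℝ ℝ ℝ).smulRight μ₁ + (ContinuousLinearMap.snd ℝ ℝ ℝ).smulRight μ₂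
    have h1 : HasFDerivAt (fun z : ℝ × ℝ => a (x + T z)) ((fderiv ℝ a x).comp T) 0 := by
      have ha' : HasFDerivAt a (fderiv ℝ a x) (x + T 0) := by
        simpa using (hsmooth.differentiable (by simp) x).hasFDerivAt
      exact ha'.comp (0 : ℝ × ℝ) (T.hasFDerivAt.const_add x)
    have h2 := (hGs.hasFDerivAt_convolution_right (ContinuousLinearMap.mul ℝ ℂ)
      locallyIntegrable_cauchyKernel hGd 0).const_smul (1 / (2 * Real.pi) : ℝ)
    have h3 : (fun z : ℝ × ℝ => a (x + T z)) = fun z => (1 / (2 * Real.pi) : ℝ) •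
        (cauchyKernel ⋆[ContinuousLinearMap.mul ℝ ℂ] G) z := by
      ext z
      rw [← hconv x z]
      simp [T, add_assoc]
    rw [h3] at h1
    have h4 := congrArg (fun L => L w) (h1.unique h2)
    have hci := (hGs.fderiv ℝ).convolutionExists_right
      ((ContinuousLinearMap.mul ℝ ℂ).precompR (ℝ × ℝ)) locallyIntegrable_cauchyKernel
      (hGd.continuous_fderiv one_ne_zero) 0
    simp only [ContinuousLinearMap.comp_apply, _root_.smul_apply] at h4
    rw [convolution_def, ContinuousLinearMap.integral_apply hci] at h4
    simpa [T, ContinuousLinearMap.precompR_apply] using h4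
  have hsum (w : Fin n → ℝ) :
      fderiv ℝ a x w = ∑ i, (w i : ℂ) * fderiv ℝ a x (Pi.single i 1) := by
    conv_lhs => rw [pi_eq_sum_univ' w]
    simp [map_sum]
  have hLHS : ∑ i, ((μ₁ i : ℂ) + Complex.I * (μ₂ i : ℂ)) * fderiv ℝ a x (Pi.single i 1)
      = fderiv ℝ a x μ₁ + Complex.I * fderiv ℝ a x μ₂ := by
    rw [hsum μ₁, hsum μ₂, Finset.mul_sum, ← Finset.sum_add_distrib]
    exact Finset.sum_congr rfl fun i _ => by ring
  have hd1 := hder (1, 0)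
  have hd2 := hder (0, 1)
  simp only [one_smul, zero_smul, add_zero, zero_add] at hd1 hd2
  -- the Cauchy–Pompeiu formula is applied to the reflected slice
  have hneg (y : ℝ × ℝ) : fderiv ℝ (fun y => G (-y)) y = -fderiv ℝ G (-y) := by
    have h := (hGd.differentiable one_ne_zero (-y)).hasFDerivAt.comp y (hasFDerivAt_id y).neg
    rw [ContinuousLinearMap.comp_neg, ContinuousLinearMap.comp_id] at h
    exact h.fderiv
  have hCP := integral_cauchyKernel_mul_dbar (g := fun y => G (-y)) (hGd.comp contDiff_neg)
    (hGs.comp_homeomorph (Homeomorph.neg (ℝ × ℝ)))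
  have hsplit : ∫ y, cauchyKernel y * (fderiv ℝ (fun y => G (-y)) y (1, 0)
        + Complex.I * fderiv ℝ (fun y => G (-y)) y (0, 1))
      = -((∫ y, cauchyKernel y * fderiv ℝ G (-y) (1, 0))
        + Complex.I * ∫ y, cauchyKernel y * fderiv ℝ G (-y) (0, 1)) := by
    rw [← integral_const_mul, ← integral_add (hint _) ((hint _).const_mul _), ← integral_neg]
    congr 1
    ext y
    rw [hneg]
    simp only [_root_.neg_apply]
    ring
  have hG0 : G (-0) = 1 := by simp [hG, planeSlice, hχx]
  rw [hsplit, hG0] at hCP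
  rw [hLHS, hd1, hd2, Complex.real_smul, Complex.real_smul]
  have hpi : (Real.pi : ℂ) ≠ 0 := by exact_mod_cast Real.pi_ne_zero
  push_cast
  field_simp
  linear_combination -hCP
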